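/- arXiv:1804.04447 — 5 statements merged into one kernel-verified Lean document; each statement's English description precedes it below -/
import Mathlib

section
/- Let n, N_t ∈ ℕ, m = n·N_t, Δt > 0, and let 𝒰 ⊆ ℝⁿ be open. Let y : 𝒰 → ℝ^m be continuously differentiable and let Ξ(u) ∈ ℝ^{m×m} be invertible matrices such that differentiating the constraint gives Ξ(u) y′(u) h = (1/Δt)(h, 0, …, 0)ᵀ for all h ∈ ℝⁿ (i.e. y′(u) = −Ξ(u)⁻¹ϒ with ϒ = −(1/Δt)[I; 0; …; 0]). Let z ∈ ℝ^{m_o}, u^b ∈ ℝⁿ, R ∈ ℝ^{m_o×m_o} and B ∈ ℝ^{n×n} symmetric positive definite, SH ∈ ℝ^{m_o×m}, μ, α, β > 0, and D, E ∈ ℝ^{(n−1)×n}. Define F(u,w) = ½(SH y(u) − z)ᵀ R⁻¹ (SH y(u) − z) + ½(u − u^b)ᵀ B⁻¹ (u − u^b) + (μ/2) wᵀw + α ∑_{i=1}^{n−1} |D_i u − w_i| + β ∑_{i=1}^{n−1} |E_i w|. If (ū, w̄) ∈ 𝒰 × ℝ^{n−1} is a local minimizer of F and p̄ ∈ ℝ^m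 is the (unique) solution of Ξ(ū)ᵀ p̄ = HᵀSᵀ R⁻¹ (SH y(ū) − z), then for all (u, w) ∈ ℝⁿ × ℝ^{n−1}: (B⁻¹(ū − u^b) + (1/Δt) p̄¹, u − ū) + (μ w̄, w − w̄) + α ∑_{i=1}^{n−1} |D_i u − w_i| − α ∑_{i=1}^{n−1} |D_i ū − w̄_i| + β ∑_{i=1}^{n−1} |E_i w| − β ∑_{i=1}^{n−1} |E_i w̄| ≥ 0, where p̄¹ ∈ ℝⁿ is the first time block of p̄. -/
open Matrix Finset

/-!
Along the segment from a local minimizer `x` to `v`, convexity bounds the nonsmooth part by its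
chord, so the smooth part plus that chord is minimal at the endpoint `x` and has a nonnegative
one-sided derivative there. For the data-misfit term this derivative involves the linearized state
`y' h`; pairing the linearized constraint `Ξ (y' h) = Υ h` with the adjoint state `p` replaces it
by `Υᵀ p ⬝ᵥ h`. Here `Υ` is the negative of the derivative of the constraint in the control, so
that no signs occur.
-/

section VariationalInequality

variable {V : Type*} [AddCommGroup V] [Module ℝ V] [TopologicalSpace V] [ContinuousAdd V]
  [ContinuousSMul ℝ V]

theorem isLocalMinOn_add_chord {f g : V → ℝ} {s : Set V} {x v : V}
    (hmin : IsLocalMinOn (fun a => f a + g a) s x) (hg : ConvexOn ℝ s g) (hx : x ∈ s)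
    (hv : v ∈ s) :
    IsLocalMinOn (fun t : ℝ => f (x + t • (v - x)) + t * (g v - g x)) (Set.Icc 0 1) 0 := by
  have segment_mem : ∀ t ∈ Set.Icc (0 : ℝ) 1, x + t • (v - x) ∈ s := fun t ht =>
    hg.1.add_smul_sub_mem hx hv ht
  have tendsto_segment : Filter.Tendsto (fun t : ℝ => x + t • (v - x))
      (nhdsWithin 0 (Set.Icc 0 1)) (nhdsWithin x s) := by
    refine tendsto_nhdsWithin_iff.2 ⟨?_, eventually_mem_nhdsWithin.mono segment_mem⟩
    have hcont : Continuous fun t : ℝ => x + t • (v - x) := by fun_prop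
    simpa using (hcont.tendsto 0).mono_left nhdsWithin_le_nhds
  filter_upwards [tendsto_segment.eventually hmin, self_mem_nhdsWithin] with t hle ht
  have chord : g (x + t • (v - x)) ≤ g x + t * (g v - g x) := by
    have hconv := hg.2 hx hv (sub_nonneg.2 ht.2) ht.1 (sub_add_cancel 1 t)
    rw [show (1 - t) • x + t • v = x + t • (v - x) by module] at hconv
    simp only [smul_eq_mul] at hconv
    linarith
  simp only [zero_smul, add_zero, zero_mul]
  linarith

theorem nonneg_lineDeriv_add_sub_of_isLocalMinOn {f g : V → ℝ} {s : Set V} {x v : V} {f' : ℝ}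
    (hmin : IsLocalMinOn (fun a => f a + g a) s x)
    (hf : HasLineDerivWithinAt ℝ f f' s x (v - x)) (hg : ConvexOn ℝ s g) (hx : x ∈ s)
    (hv : v ∈ s) :
    0 ≤ f' + (g v - g x) := by
  have hf_segment : HasDerivWithinAt (fun t : ℝ => f (x + t • (v - x))) f' (Set.Icc 0 1) 0 :=
    HasDerivWithinAt.mono hf fun t ht => hg.1.add_smul_sub_mem hx hv ht
  have hderiv := hf_segment.add ((hasDerivWithinAt_id 0 _).mul_const (g v - g x))
  have one_mem_cone : (1 : ℝ) ∈ posTangentConeAt (Set.Icc (0 : ℝ) 1) 0 :=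
    mem_posTangentConeAt_of_segment_subset (by rw [zero_add, segment_eq_Icc zero_le_one])
  simpa using (isLocalMinOn_add_chord hmin hg hx hv).hasFDerivWithinAt_nonneg
    hderiv.hasFDerivWithinAt one_mem_cone

end VariationalInequality

theorem isSymm_of_isHermitian {R ι : Type*} [Star R] [TrivialStar R] {M : Matrix ι ι R}
    (hM : M.IsHermitian) : M.IsSymm :=
  (conjTranspose_eq_transpose_of_trivial M).symm.trans hM

section MatrixCalculus

variable {𝕜 ι κ : Type*} [NontriviallyNormedField 𝕜] [Fintype ι]

theorem hasDerivAt_mulVec [Finite κ] (M : Matrix κ ι 𝕜) {v : 𝕜 → ι → 𝕜} {v' : ι → 𝕜} {t : 𝕜}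
    (hv : HasDerivAt v v' t) :
    HasDerivAt (fun s => M *ᵥ v s) (M *ᵥ v') t := by
  cases nonempty_fintype κ
  rw [hasDerivAt_pi] at hv ⊢
  exact fun k => HasDerivAt.fun_sum fun i _ => (hv i).const_mul (M k i)

theorem hasDerivAt_dotProduct {v w : 𝕜 → ι → 𝕜} {v' w' : ι → 𝕜} {t : 𝕜}
    (hv : HasDerivAt v v' t) (hw : HasDerivAt w w' t) :
    HasDerivAt (fun s => v s ⬝ᵥ w s) (v' ⬝ᵥ w t + v t ⬝ᵥ w') t := by
  rw [hasDerivAt_pi] at hv hw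
  simp only [dotProduct, ← sum_add_distrib]
  exact HasDerivAt.fun_sum fun i _ => (hv i).mul (hw i)

theorem hasDerivAt_dotProduct_mulVec_self {M : Matrix ι ι 𝕜} (hM : M.IsSymm)
    {v : 𝕜 → ι → 𝕜} {v' : ι → 𝕜} {t : 𝕜} (hv : HasDerivAt v v' t) :
    HasDerivAt (fun s => v s ⬝ᵥ M *ᵥ v s) (2 * (M *ᵥ v t ⬝ᵥ v')) t := by
  refine (hasDerivAt_dotProduct hv (hasDerivAt_mulVec M hv)).congr_deriv ?_
  have symm_pairing : v t ⬝ᵥ M *ᵥ v' = v' ⬝ᵥ M *ᵥ v t := by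
    rw [← dotProduct_transpose_mulVec, hM.eq]
  rw [symm_pairing, dotProduct_comm v', two_mul]

end MatrixCalculus

theorem convexOn_sum_abs_linearMap {V κ : Type*} [AddCommGroup V] [Module ℝ V] [Fintype κ]
    (L : V →ₗ[ℝ] κ → ℝ) :
    ConvexOn ℝ Set.univ fun x => ∑ i, |L x i| := by
  refine ⟨convex_univ, fun x _ v _ a b ha hb _ => ?_⟩
  simp only [map_add, map_smul, Pi.add_apply, Pi.smul_apply, smul_eq_mul, mul_sum,
    ← sum_add_distrib]
  refine sum_le_sum fun i _ => (abs_add_le _ _).trans_eq ?_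
  rw [abs_mul, abs_mul, abs_of_nonneg ha, abs_of_nonneg hb]

section AdjointState

variable {R ι σ ρ ω : Type*} [CommSemiring R] [Fintype ι] [Fintype σ] [Fintype ρ] [Fintype ω]

theorem dotProduct_mulVec_eq_of_adjoint {Ξ : Matrix ρ σ R} {Υ : Matrix ρ ι R}
    {H : Matrix ω σ R} {p : ρ → R} {r : ω → R} {δy : σ → R} {h : ι → R}
    (hstate : Ξ *ᵥ δy = Υ *ᵥ h) (hadjoint : Ξᵀ *ᵥ p = Hᵀ *ᵥ r) :
    r ⬝ᵥ H *ᵥ δy = Υᵀ *ᵥ p ⬝ᵥ h := by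
  calc r ⬝ᵥ H *ᵥ δy = δy ⬝ᵥ Hᵀ *ᵥ r := (dotProduct_transpose_mulVec H δy r).symm
    _ = δy ⬝ᵥ Ξᵀ *ᵥ p := by rw [hadjoint]
    _ = p ⬝ᵥ Ξ *ᵥ δy := dotProduct_transpose_mulVec Ξ δy p
    _ = p ⬝ᵥ Υ *ᵥ h := by rw [hstate]
    _ = h ⬝ᵥ Υᵀ *ᵥ p := (dotProduct_transpose_mulVec Υ h p).symm
    _ = Υᵀ *ᵥ p ⬝ᵥ h := dotProduct_comm _ _

end AdjointState

section BlockInclusion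

variable {R τ ι : Type*} [CommSemiring R] [DecidableEq τ] [DecidableEq ι]

/-- The matrix of the embedding of `R^ι` as the block with index `t₀` of `R^(τ × ι)`; this is
how an initial condition enters the equation of the first time step. -/
def blockInclusion (t₀ : τ) : Matrix (τ × ι) ι R :=
  (1 : Matrix (τ × ι) (τ × ι) R).submatrix id (Prod.mk t₀)

theorem blockInclusion_mulVec [Fintype ι] (t₀ : τ) (h : ι → R) :
    blockInclusion t₀ *ᵥ h = fun ji => if ji.1 = t₀ then h ji.2 else 0 := by
  ext ⟨j, i⟩
  by_cases hj : j = t₀ <;> simp [blockInclusion, mulVec, dotProduct, one_apply, hj]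

theorem smul_blockInclusion_zero_mulVec [Fintype ι] {N : ℕ} (hN : 0 < N) (c : R) (h : ι → R) :
    (c • blockInclusion ⟨0, hN⟩) *ᵥ h =
      fun ji : Fin N × ι => if (ji.1 : ℕ) = 0 then c * h ji.2 else 0 := by
  ext ji
  simp [smul_mulVec, blockInclusion_mulVec, Fin.ext_iff]

theorem transpose_blockInclusion_mulVec [Fintype τ] [Fintype ι] (t₀ : τ) (p : τ × ι → R) :
    (blockInclusion t₀)ᵀ *ᵥ p = fun i => p (t₀, i) := by
  ext i
  simp [blockInclusion, mulVec, dotProduct, one_apply]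

end BlockInclusion

section Assimilation

variable {ι κ ρ σ ω : Type*} [Fintype ι] [Fintype κ] [Fintype ρ] [Fintype ω]

/-- The second-order total generalized variation penalty of the pair `(u, w)`, with `D` and `E`
the discrete gradients acting on `u` and on `w`. -/
def tgvPenalty (D : Matrix κ ι ℝ) (E : Matrix ρ κ ℝ) (α β : ℝ) (x : (ι → ℝ) × (κ → ℝ)) : ℝ :=
  α * ∑ i, |(D *ᵥ x.1) i - x.2 i| + β * ∑ i, |(E *ᵥ x.2) i|

theorem convexOn_tgvPenalty (D : Matrix κ ι ℝ) (E : Matrix ρ κ ℝ) {α β : ℝ} (hα : 0 ≤ α)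
    (hβ : 0 ≤ β) : ConvexOn ℝ Set.univ (tgvPenalty D E α β) := by
  have first_order := convexOn_sum_abs_linearMap
    (D.mulVecLin ∘ₗ LinearMap.fst ℝ (ι → ℝ) (κ → ℝ) - LinearMap.snd ℝ (ι → ℝ) (κ → ℝ))
  have second_order := convexOn_sum_abs_linearMap
    (E.mulVecLin ∘ₗ LinearMap.snd ℝ (ι → ℝ) (κ → ℝ))
  exact (first_order.smul hα).add (second_order.smul hβ)

variable [Fintype σ]

/-- The differentiable part of the reduced data assimilation functional: observation misfit,
background misfit and the quadratic term in `w`. The matrices `Q` and `P` stand for the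
precisions of the observation and background errors, i.e. `R⁻¹` and `B⁻¹`. -/
noncomputable def smoothCost (y : (ι → ℝ) → σ → ℝ) (H : Matrix ω σ ℝ) (z : ω → ℝ)
    (Q : Matrix ω ω ℝ) (ub : ι → ℝ) (P : Matrix ι ι ℝ) (μ : ℝ) (x : (ι → ℝ) × (κ → ℝ)) : ℝ :=
  (1 / 2) * ((H *ᵥ y x.1 - z) ⬝ᵥ (Q *ᵥ (H *ᵥ y x.1 - z))) +
    (1 / 2) * ((x.1 - ub) ⬝ᵥ (P *ᵥ (x.1 - ub))) + (μ / 2) * (x.2 ⬝ᵥ x.2)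

theorem hasLineDerivAt_smoothCost {y : (ι → ℝ) → σ → ℝ} {δy : σ → ℝ} {u h : ι → ℝ}
    (hy : HasLineDerivAt ℝ y δy u h) (H : Matrix ω σ ℝ) (z : ω → ℝ) {Q : Matrix ω ω ℝ}
    (hQ : Q.IsSymm) (ub : ι → ℝ) {P : Matrix ι ι ℝ} (hP : P.IsSymm) (μ : ℝ) (w k : κ → ℝ) :
    HasLineDerivAt ℝ (smoothCost y H z Q ub P μ)
      (Q *ᵥ (H *ᵥ y u - z) ⬝ᵥ H *ᵥ δy + P *ᵥ (u - ub) ⬝ᵥ h + (μ • w) ⬝ᵥ k) (u, w) (h, k) := by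
  have hu : HasLineDerivAt ℝ id h u h := (hasFDerivAt_id u).hasLineDerivAt h
  have hw : HasLineDerivAt ℝ id k w k := (hasFDerivAt_id w).hasLineDerivAt k
  have observation :=
    hasDerivAt_dotProduct_mulVec_self hQ ((hasDerivAt_mulVec H hy).sub_const z)
  have background := hasDerivAt_dotProduct_mulVec_self hP (HasDerivAt.sub_const ub hu)
  have quadratic := hasDerivAt_dotProduct hw hw
  refine (((observation.const_mul (1 / 2)).add (background.const_mul (1 / 2))).add
    (quadratic.const_mul (μ / 2))).congr_deriv ?_
  simp only [id, zero_smul, add_zero, smul_dotProduct, smul_eq_mul, dotProduct_comm k w]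
  ring

theorem stmt_5_general {y : (ι → ℝ) → σ → ℝ} {y' : (ι → ℝ) → σ → ℝ} {ubar : ι → ℝ}
    (hy : ∀ h, HasLineDerivAt ℝ y (y' h) ubar h) {ν : Type*} [Fintype ν] {Ξ : Matrix ν σ ℝ}
    {Υ : Matrix ν ι ℝ} (hconstr : ∀ h, Ξ *ᵥ y' h = Υ *ᵥ h) {z : ω → ℝ} {ub : ι → ℝ}
    {Q : Matrix ω ω ℝ} (hQ : Q.IsSymm) {P : Matrix ι ι ℝ} (hP : P.IsSymm) {H : Matrix ω σ ℝ}
    {μ α β : ℝ} (hα : 0 ≤ α) (hβ : 0 ≤ β) {D : Matrix κ ι ℝ} {E : Matrix ρ κ ℝ}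
    {F : (ι → ℝ) × (κ → ℝ) → ℝ}
    (hF : ∀ u w, F (u, w) =
      (1 / 2) * ((H *ᵥ y u - z) ⬝ᵥ (Q *ᵥ (H *ᵥ y u - z))) +
      (1 / 2) * ((u - ub) ⬝ᵥ (P *ᵥ (u - ub))) + (μ / 2) * (w ⬝ᵥ w) +
      α * ∑ i, |(D *ᵥ u) i - w i| + β * ∑ i, |(E *ᵥ w) i|)
    {wbar : κ → ℝ} (hmin : IsLocalMin F (ubar, wbar)) {p : ν → ℝ}
    (hp : Ξᵀ *ᵥ p = Hᵀ *ᵥ (Q *ᵥ (H *ᵥ y ubar - z))) (u : ι → ℝ) (w : κ → ℝ) :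
    0 ≤ (P *ᵥ (ubar - ub) + Υᵀ *ᵥ p) ⬝ᵥ (u - ubar) + (μ • wbar) ⬝ᵥ (w - wbar) +
      α * ∑ i, |(D *ᵥ u) i - w i| - α * ∑ i, |(D *ᵥ ubar) i - wbar i| +
      β * ∑ i, |(E *ᵥ w) i| - β * ∑ i, |(E *ᵥ wbar) i| := by
  have split : F = fun x => smoothCost y H z Q ub P μ x + tgvPenalty D E α β x :=
    funext fun x => (hF x.1 x.2).trans (add_assoc _ _ _)
  have smooth_deriv :=
    hasLineDerivAt_smoothCost (hy (u - ubar)) H z hQ ub hP μ wbar (w - wbar)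
  have inequality := nonneg_lineDeriv_add_sub_of_isLocalMinOn (v := (u, w))
    ((split ▸ hmin).on Set.univ) (smooth_deriv.hasLineDerivWithinAt _)
    (convexOn_tgvPenalty D E hα hβ) (Set.mem_univ _) (Set.mem_univ _)
  rw [dotProduct_mulVec_eq_of_adjoint (hconstr (u - ubar)) hp] at inequality
  simp only [tgvPenalty] at inequality
  rw [add_dotProduct]
  linarith

end Assimilation

/-- First-order optimality (KKT) system for the TGV-regularized
reduced data assimilation problem: if `(ū, w̄)` is a local minimizer of the
reduced objective `F` and `p̄` solves the adjoint equation
`Ξ(ū)ᵀ p̄ = (SH)ᵀ R⁻¹ (SH y(ū) − z)`, then the variational inequality holds. -/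
theorem stmt_5 (n Nt mo : ℕ) (hNt : 0 < Nt) (Δt : ℝ) (hΔt : 0 < Δt)
    (𝒰 : Set (Fin n → ℝ)) (hopen : IsOpen 𝒰)
    (y : (Fin n → ℝ) → (Fin Nt × Fin n → ℝ)) (hy : ContDiffOn ℝ 1 y 𝒰)
    (Ξ : (Fin n → ℝ) → Matrix (Fin Nt × Fin n) (Fin Nt × Fin n) ℝ)
    (hΞ : ∀ u ∈ 𝒰, IsUnit (Ξ u))
    (hconstr : ∀ u ∈ 𝒰, ∀ h : Fin n → ℝ,
      Ξ u *ᵥ (fderiv ℝ y u h) =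
        fun ji : Fin Nt × Fin n => if (ji.1 : ℕ) = 0 then (1 / Δt) * h ji.2 else 0)
    (z : Fin mo → ℝ) (ub : Fin n → ℝ)
    (R : Matrix (Fin mo) (Fin mo) ℝ) (hR : R.PosDef)
    (B : Matrix (Fin n) (Fin n) ℝ) (hB : B.PosDef)
    (SH : Matrix (Fin mo) (Fin Nt × Fin n) ℝ)
    (μ α β : ℝ) (hμ : 0 < μ) (hα : 0 < α) (hβ : 0 < β)
    (D : Matrix (Fin (n - 1)) (Fin n) ℝ) (E : Matrix (Fin (n - 1)) (Fin (n - 1)) ℝ)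
    (F : (Fin n → ℝ) × (Fin (n - 1) → ℝ) → ℝ)
    (hF : ∀ u w, F (u, w) =
      (1 / 2) * ((SH *ᵥ y u - z) ⬝ᵥ (R⁻¹ *ᵥ (SH *ᵥ y u - z))) +
      (1 / 2) * ((u - ub) ⬝ᵥ (B⁻¹ *ᵥ (u - ub))) + (μ / 2) * (w ⬝ᵥ w) +
      α * ∑ i, |(D *ᵥ u) i - w i| + β * ∑ i, |(E *ᵥ w) i|)
    (ubar : Fin n → ℝ) (wbar : Fin (n - 1) → ℝ) (hubar : ubar ∈ 𝒰)
    (hmin : IsLocalMin F (ubar, wbar))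
    (pbar : Fin Nt × Fin n → ℝ)
    (hp : (Ξ ubar)ᵀ *ᵥ pbar = SHᵀ *ᵥ (R⁻¹ *ᵥ (SH *ᵥ y ubar - z))) :
    ∀ (u : Fin n → ℝ) (w : Fin (n - 1) → ℝ),
      0 ≤ ((B⁻¹ *ᵥ (ubar - ub)) +
            (1 / Δt) • (fun i : Fin n => pbar (⟨0, hNt⟩, i))) ⬝ᵥ (u - ubar) +
          (μ • wbar) ⬝ᵥ (w - wbar) +
          α * ∑ i, |(D *ᵥ u) i - w i| - α * ∑ i, |(D *ᵥ ubar) i - wbar i| +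
          β * ∑ i, |(E *ᵥ w) i| - β * ∑ i, |(E *ᵥ wbar) i| := by
  have hyd : DifferentiableAt ℝ y ubar :=
    (hy.differentiableOn one_ne_zero).differentiableAt (hopen.mem_nhds hubar)
  simpa only [transpose_smul, smul_mulVec, transpose_blockInclusion_mulVec] using
    stmt_5_general hyd.hasFDerivAt.hasLineDerivAt
      (fun h => (hconstr ubar hubar h).trans (smul_blockInclusion_zero_mulVec hNt _ h).symm)
      (isSymm_of_isHermitian hR.isHermitian.inv) (isSymm_of_isHermitian hB.isHermitian.inv)
      hα.le hβ.le hF hmin hp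
end

section
/- Let (γ_k) be a sequence with γ_k → ∞, and for each k let (y_k, u_k, w_k) be a global minimizer of the Huber-regularized objective J_{γ_k} over the feasible set {(y,u,w) : e(y,u) = 0}, where e is continuous and every feasible pair satisfies the a-priori bound ‖y‖ ≤ c₀(1 + ‖u‖) for a fixed constant c₀. Let (y*, u*, w*) be a global minimizer of the original objective J over the same feasible set. Assume B is symmetric positive definite, μ > 0, and that the Huber family (H_γ) consists of continuous functions with 0 ≤ H_γ(t) ≤ |t| for all t and H_γ → |·| uniformly on compact subsets of ℝ as γ → ∞. Then there exists a subsequence (y_{k_j}, u_{k_j}, w_{k_j}) converging to some (ȳ, ū, w̄) which is feasible, e(ȳ, ū) = 0, and which is itself a global minimizer of J over the feasible set. -/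
open Matrix Finset Filter

/-!
If `f k → g` continuously, meaning that `f k y → g a` as `k → ∞` and `y → a` jointly, then the
inequalities `f k (x k) ≤ f k b` pass to the limit along `x k → a`, so limits of minimizers are
minimizers. Limits exist because the quadratic terms, which do not depend on the regularization,
control `u` and `w`, the a priori estimate controls `y` in terms of `u`, and the minimal values
`f k (x k) ≤ f k b → g b` are bounded for any fixed feasible `b`.
-/

section Minimizers

open scoped Topology

theorem isMinOn_of_tendsto_uncurry {ι X β : Type*} [TopologicalSpace X] [TopologicalSpace β]
    [Preorder β] [OrderClosedTopology β] {l : Filter ι} [l.NeBot] {f : ι → X → β} {g : X → β}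
    {F : Set X} {x : ι → X} {a : X}
    (hfg : ∀ b, Tendsto (fun q : ι × X => f q.1 q.2) (l ×ˢ 𝓝 b) (𝓝 (g b)))
    (hmin : ∀ i, IsMinOn (f i) F (x i)) (hx : Tendsto x l (𝓝 a)) : IsMinOn g F a :=
  isMinOn_iff.2 fun b hb =>
    le_of_tendsto_of_tendsto' ((hfg a).comp (tendsto_id.prodMk hx))
      ((hfg b).comp (tendsto_id.prodMk tendsto_const_nhds)) fun i => isMinOn_iff.1 (hmin i) b hb

theorem isBounded_range_of_isMinOn {X : Type*} [Bornology X] {f : ℕ → X → ℝ} {ψ : X → ℝ}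
    {F : Set X} {x : ℕ → X} {b : X} {v : ℝ} (hb : b ∈ F)
    (hfb : Tendsto (fun k => f k b) atTop (𝓝 v)) (hψf : ∀ k y, ψ y ≤ f k y)
    (hψ : ∀ M, Bornology.IsBounded {y ∈ F | ψ y ≤ M}) (hxF : ∀ k, x k ∈ F)
    (hmin : ∀ k, IsMinOn (f k) F (x k)) : Bornology.IsBounded (Set.range x) := by
  obtain ⟨M, hM⟩ := hfb.bddAbove_range
  refine (hψ M).subset (Set.range_subset_iff.2 fun k => ⟨hxF k, ?_⟩)
  calc ψ (x k) ≤ f k (x k) := hψf k (x k)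
    _ ≤ f k b := isMinOn_iff.1 (hmin k) b hb
    _ ≤ M := hM (Set.mem_range_self k)

theorem exists_subseq_tendsto_isMinOn {X : Type*} [PseudoMetricSpace X] [ProperSpace X]
    {f : ℕ → X → ℝ} {g ψ : X → ℝ} {F : Set X} {x : ℕ → X} (hF : IsClosed F)
    (hfg : ∀ b, Tendsto (fun q : ℕ × X => f q.1 q.2) (atTop ×ˢ 𝓝 b) (𝓝 (g b)))
    (hψf : ∀ k y, ψ y ≤ f k y) (hψ : ∀ M, Bornology.IsBounded {y ∈ F | ψ y ≤ M})
    (hxF : ∀ k, x k ∈ F) (hmin : ∀ k, IsMinOn (f k) F (x k)) :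
    ∃ φ : ℕ → ℕ, StrictMono φ ∧ ∃ a ∈ F, Tendsto (x ∘ φ) atTop (𝓝 a) ∧ IsMinOn g F a := by
  have hvalue : Tendsto (fun k => f k (x 0)) atTop (𝓝 (g (x 0))) :=
    (hfg (x 0)).comp (tendsto_id.prodMk tendsto_const_nhds)
  have hbdd : Bornology.IsBounded (Set.range x) :=
    isBounded_range_of_isMinOn (hxF 0) hvalue hψf hψ hxF hmin
  obtain ⟨a, -, φ, hφ, hlim⟩ := tendsto_subseq_of_bounded hbdd Set.mem_range_self
  refine ⟨φ, hφ, a, hF.mem_of_tendsto hlim (.of_forall fun j => hxF (φ j)), hlim, ?_⟩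
  exact isMinOn_of_tendsto_uncurry (f := fun j => f (φ j))
    (fun b => (hfg b).comp (hφ.tendsto_atTop.prodMap tendsto_id)) (fun j => hmin (φ j)) hlim

theorem tendsto_uncurry_of_tendstoLocallyUniformly {ι X Y : Type*} [TopologicalSpace X]
    [UniformSpace Y] {F : ι → X → Y} {f : X → Y} {l : Filter ι} {a : X}
    (hF : TendstoLocallyUniformly F f l) (hf : ContinuousAt f a) :
    Tendsto (fun q : ι × X => F q.1 q.2) (l ×ˢ 𝓝 a) (𝓝 (f a)) :=
  (hf.tendsto.comp tendsto_snd).congr_uniformity (tendstoLocallyUniformly_iff_filter.1 hF a)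

end Minimizers

open scoped MatrixOrder ComplexOrder in
theorem exists_pos_mul_norm_sq_le_of_posDef {𝕜 n : Type*} [RCLike 𝕜] [Fintype n]
    {M : Matrix n n 𝕜} (hM : M.PosDef) :
    ∃ c : ℝ, 0 < c ∧ ∀ v : EuclideanSpace 𝕜 n, c * ‖v‖ ^ 2 ≤ RCLike.re (star ⇑v ⬝ᵥ M *ᵥ v) := by
  classical
  cases isEmpty_or_nonempty n
  · exact ⟨1, one_pos, fun v => by simp [Subsingleton.elim v 0]⟩
  obtain ⟨c, hc, hcM⟩ := (CFC.exists_pos_algebraMap_le_iff hM.isHermitian).2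
    fun x hx => hM.isStrictlyPositive.spectrum_pos hx
  refine ⟨c, hc, fun v => sub_nonneg.1 ?_⟩
  have hnorm : RCLike.re (star ⇑v ⬝ᵥ v) = ‖v‖ ^ 2 := by
    rw [dotProduct_comm, ← EuclideanSpace.inner_eq_star_dotProduct, inner_self_eq_norm_sq]
  have hnonneg : 0 ≤ RCLike.re (star ⇑v ⬝ᵥ (M - algebraMap ℝ (Matrix n n 𝕜) c) *ᵥ v) :=
    (Matrix.le_iff.1 hcM).re_dotProduct_nonneg v
  rwa [sub_mulVec, dotProduct_sub, map_sub, Algebra.algebraMap_eq_smul_one, smul_mulVec,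
    one_mulVec, dotProduct_smul, RCLike.smul_re, hnorm] at hnonneg

/-- The data of a variational assimilation problem with a second-order total-variation penalty.
The weights `obsPrec` and `bgPrec` are the precision matrices, that is `R⁻¹` and `B⁻¹` in terms of
the error covariances. `D` and `E` play the role of difference operators but may be any matrices. -/
structure TVAssimilation (m n o r s : Type*) where
  obs : Matrix o m ℝ
  obsData : o → ℝ
  obsPrec : Matrix o o ℝ
  bgPrec : Matrix n n ℝ
  background : EuclideanSpace ℝ n
  μ : ℝ
  α : ℝ
  β : ℝ
  D : Matrix r n ℝ
  E : Matrix s r ℝ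

namespace TVAssimilation

open scoped Topology

/-- The space of triples `(y, u, w)` of a state, a control and an auxiliary variable. -/
abbrev Point (m n r : Type*) : Type _ :=
  EuclideanSpace ℝ m × EuclideanSpace ℝ n × EuclideanSpace ℝ r

variable {m n o r s : Type*} [Fintype m] [Fintype n] [Fintype o] [Fintype r]

/-- The part of the objective that is not regularized: data misfit, background misfit and the
quadratic cost of the auxiliary variable `w`. -/
noncomputable def quadratic (T : TVAssimilation m n o r s) (x : Point m n r) : ℝ :=
  (1 / 2) * ((T.obs *ᵥ x.1 - T.obsData) ⬝ᵥ (T.obsPrec *ᵥ (T.obs *ᵥ x.1 - T.obsData))) +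
  (1 / 2) * ((x.2.1 - T.background) ⬝ᵥ (T.bgPrec *ᵥ (x.2.1 - T.background))) +
  (T.μ / 2) * (x.2.2 ⬝ᵥ x.2.2)

/-- The objective in which `h` measures the entries of `D u - w` and `E w`: `h = |·|` gives the
original objective `J` and `h = H γ` the regularized objective `J_γ`. -/
noncomputable def objective [Fintype s] (T : TVAssimilation m n o r s) (h : ℝ → ℝ)
    (x : Point m n r) : ℝ :=
  T.quadratic x + T.α * ∑ i, h ((T.D *ᵥ x.2.1) i - x.2.2 i) + T.β * ∑ i, h ((T.E *ᵥ x.2.2) i)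

theorem continuous_quadratic (T : TVAssimilation m n o r s) : Continuous T.quadratic := by
  unfold quadratic
  fun_prop

variable {T : TVAssimilation m n o r s}

theorem exists_pos_norm_sq_add_norm_sq_le_quadratic (hobs : T.obsPrec.PosSemidef)
    (hbg : T.bgPrec.PosDef) :
    ∃ c : ℝ, 0 < c ∧ ∀ x : Point m n r,
      c * ‖x.2.1 - T.background‖ ^ 2 + T.μ / 2 * ‖x.2.2‖ ^ 2 ≤ T.quadratic x := by
  obtain ⟨c, hc, hcbg⟩ := exists_pos_mul_norm_sq_le_of_posDef hbg
  refine ⟨c / 2, half_pos hc, fun x => ?_⟩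
  have hdata : 0 ≤ (T.obs *ᵥ x.1 - T.obsData) ⬝ᵥ
      (T.obsPrec *ᵥ (T.obs *ᵥ x.1 - T.obsData)) := by
    simpa using hobs.dotProduct_mulVec_nonneg (T.obs *ᵥ x.1 - T.obsData)
  have hcontrol : c * ‖x.2.1 - T.background‖ ^ 2 ≤
      (x.2.1 - T.background) ⬝ᵥ (T.bgPrec *ᵥ (x.2.1 - T.background)) := by
    simpa using hcbg (x.2.1 - T.background)
  have hnorm : x.2.2 ⬝ᵥ x.2.2 = ‖x.2.2‖ ^ 2 := by
    rw [EuclideanSpace.real_norm_sq_eq]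
    simp only [dotProduct, sq]
  rw [quadratic, hnorm]
  linarith

theorem isBounded_setOf_quadratic_le (hobs : T.obsPrec.PosSemidef) (hbg : T.bgPrec.PosDef)
    (hμ : 0 < T.μ) (c₀ M : ℝ) :
    Bornology.IsBounded
      {x : Point m n r | ‖x.1‖ ≤ c₀ * (1 + ‖x.2.1‖) ∧ T.quadratic x ≤ M} := by
  obtain ⟨c, hc, hlower⟩ := exists_pos_norm_sq_add_norm_sq_le_quadratic hobs hbg
  set ρ : ℝ := ‖T.background‖ + √(M / c) with hρ
  refine (Metric.isBounded_closedBall (x := 0) (r := |c₀| * (1 + ρ))).prod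
    ((Metric.isBounded_closedBall (x := 0) (r := ρ)).prod
      (Metric.isBounded_closedBall (x := 0) (r := √(M / (T.μ / 2))))) |>.subset ?_
  rintro ⟨y, u, w⟩ ⟨hyu, hM⟩
  have hsum : c * ‖u - T.background‖ ^ 2 + T.μ / 2 * ‖w‖ ^ 2 ≤ M := (hlower (y, u, w)).trans hM
  have hw : ‖w‖ ≤ √(M / (T.μ / 2)) := by
    refine Real.le_sqrt_of_sq_le ((le_div_iff₀' (by positivity)).2 ?_)
    exact (le_add_of_nonneg_left (by positivity)).trans hsum
  have hdist : ‖u - T.background‖ ≤ √(M / c) := by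
    refine Real.le_sqrt_of_sq_le ((le_div_iff₀' hc).2 ?_)
    exact (le_add_of_nonneg_right (by positivity)).trans hsum
  have hu : ‖u‖ ≤ ρ := (norm_le_norm_add_norm_sub' u T.background).trans (by rw [hρ]; gcongr)
  have hy : ‖y‖ ≤ |c₀| * (1 + ρ) := by
    calc ‖y‖ ≤ c₀ * (1 + ‖u‖) := hyu
      _ ≤ |c₀| * (1 + ρ) := by gcongr; exact le_abs_self c₀
  simpa only [Set.mem_prod, mem_closedBall_zero_iff] using ⟨hy, hu, hw⟩

variable [Fintype s]

theorem quadratic_le_objective {h : ℝ → ℝ} (hα : 0 ≤ T.α) (hβ : 0 ≤ T.β) (hh : ∀ t, 0 ≤ h t)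
    (x : Point m n r) : T.quadratic x ≤ T.objective h x := by
  have hfirst : 0 ≤ T.α * ∑ i, h ((T.D *ᵥ x.2.1) i - x.2.2 i) :=
    mul_nonneg hα (sum_nonneg fun i _ => hh _)
  have hsecond : 0 ≤ T.β * ∑ i, h ((T.E *ᵥ x.2.2) i) :=
    mul_nonneg hβ (sum_nonneg fun i _ => hh _)
  unfold objective
  linarith

theorem tendsto_uncurry_objective {ι : Type*} {l : Filter ι} {H : ι → ℝ → ℝ} {h : ℝ → ℝ}
    (hh : Continuous h) (hH : TendstoLocallyUniformly H h l) (a : Point m n r) :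
    Tendsto (fun q : ι × Point m n r => T.objective (H q.1) q.2) (l ×ˢ 𝓝 a)
      (𝓝 (T.objective h a)) := by
  have hcomp {L : Point m n r → ℝ} (hL : Continuous L) :
      Tendsto (fun q : ι × Point m n r => H q.1 (L q.2)) (l ×ˢ 𝓝 a) (𝓝 (h (L a))) :=
    (tendsto_uncurry_of_tendstoLocallyUniformly hH hh.continuousAt).comp
      (tendsto_id.prodMap (hL.tendsto a))
  have hD : Continuous fun x : Point m n r => T.D *ᵥ x.2.1 - x.2.2 := by fun_prop
  have hE : Continuous fun x : Point m n r => T.E *ᵥ x.2.2 := by fun_prop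
  have hquad := (T.continuous_quadratic.tendsto a).comp (tendsto_snd (f := l))
  refine (hquad.add (.const_mul _ ?_)).add (.const_mul _ ?_)
  · exact tendsto_finsetSum _ fun i _ => hcomp ((continuous_apply i).comp hD)
  · exact tendsto_finsetSum _ fun i _ => hcomp ((continuous_apply i).comp hE)

end TVAssimilation

theorem stmt_9_general {m n o r s Z : Type*} [Fintype m] [Fintype n] [Fintype o] [Fintype r]
    [Fintype s] [TopologicalSpace Z] [T1Space Z] [Zero Z] (T : TVAssimilation m n o r s)
    (hobs : T.obsPrec.PosSemidef) (hbg : T.bgPrec.PosDef)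
    (hμ : 0 < T.μ) (hα : 0 ≤ T.α) (hβ : 0 ≤ T.β)
    {e : EuclideanSpace ℝ m → EuclideanSpace ℝ n → Z}
    (he : Continuous fun p : EuclideanSpace ℝ m × EuclideanSpace ℝ n => e p.1 p.2)
    {c₀ : ℝ} (hapriori : ∀ y u, e y u = 0 → ‖y‖ ≤ c₀ * (1 + ‖u‖))
    {H : ℕ → ℝ → ℝ} {h : ℝ → ℝ} (hh : Continuous h) (hH_nonneg : ∀ k t, 0 ≤ H k t)
    (hH : TendstoLocallyUniformly H h atTop)
    {y : ℕ → EuclideanSpace ℝ m} {u : ℕ → EuclideanSpace ℝ n} {w : ℕ → EuclideanSpace ℝ r}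
    (hfeas : ∀ k, e (y k) (u k) = 0)
    (hmin : ∀ k y' u' w', e y' u' = 0 →
      T.objective (H k) (y k, u k, w k) ≤ T.objective (H k) (y', u', w')) :
    ∃ φ : ℕ → ℕ, StrictMono φ ∧ ∃ ybar ubar wbar,
      Tendsto (fun j => (y (φ j), u (φ j), w (φ j))) atTop (nhds (ybar, ubar, wbar)) ∧
      e ybar ubar = 0 ∧
      ∀ y' u' w', e y' u' = 0 → T.objective h (ybar, ubar, wbar) ≤ T.objective h (y', u', w') := by
  let feasible : Set (TVAssimilation.Point m n r) := {x | e x.1 x.2.1 = 0}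
  have hclosed : IsClosed feasible :=
    isClosed_singleton.preimage (he.comp (continuous_fst.prodMk continuous_snd.fst))
  have hsublevel (M : ℝ) : Bornology.IsBounded {x ∈ feasible | T.quadratic x ≤ M} :=
    (TVAssimilation.isBounded_setOf_quadratic_le hobs hbg hμ c₀ M).subset
      fun x hx => ⟨hapriori x.1 x.2.1 hx.1, hx.2⟩
  obtain ⟨φ, hφ, ⟨ybar, ubar, wbar⟩, hbar, hlim, hminbar⟩ :=
    exists_subseq_tendsto_isMinOn (x := fun k => (y k, u k, w k)) hclosed
      (TVAssimilation.tendsto_uncurry_objective hh hH)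
      (fun k => TVAssimilation.quadratic_le_objective hα hβ (hH_nonneg k)) hsublevel hfeas
      fun k => isMinOn_iff.2 fun x hx => hmin k x.1 x.2.1 x.2.2 hx
  exact ⟨φ, hφ, ybar, ubar, wbar, hlim, hbar,
    fun y' u' w' hfeas' => isMinOn_iff.1 hminbar (y', u', w') hfeas'⟩

/-- Consistency of the Huber regularization: along a sequence
`γ_k → ∞`, global minimizers of the Huber-regularized objectives `J_{γ_k}` over
the feasible set `{e(y,u) = 0}` admit a subsequence converging to a feasible
point which is a global minimizer of the original objective `J`. -/
theorem stmt_9 (n m mo : ℕ)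
    (SH : Matrix (Fin mo) (Fin m) ℝ) (z : Fin mo → ℝ)
    (R : Matrix (Fin mo) (Fin mo) ℝ) (hR : R.PosDef)
    (B : Matrix (Fin n) (Fin n) ℝ) (hB : B.PosDef)
    (μ α β : ℝ) (hμ : 0 < μ) (hα : 0 < α) (hβ : 0 < β)
    (ub : EuclideanSpace ℝ (Fin n))
    (D : Matrix (Fin (n - 1)) (Fin n) ℝ) (E : Matrix (Fin (n - 1)) (Fin (n - 1)) ℝ)
    (e : EuclideanSpace ℝ (Fin m) → EuclideanSpace ℝ (Fin n) → EuclideanSpace ℝ (Fin m))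
    (he_cont : Continuous fun p : EuclideanSpace ℝ (Fin m) × EuclideanSpace ℝ (Fin n) =>
      e p.1 p.2)
    (c₀ : ℝ)
    (hapriori : ∀ y u, e y u = 0 → ‖y‖ ≤ c₀ * (1 + ‖u‖))
    (H : ℝ → ℝ → ℝ)
    (hHcont : ∀ γ, Continuous (H γ))
    (hHbd : ∀ γ t, 0 ≤ H γ t ∧ H γ t ≤ |t|)
    (hHunif : ∀ K : Set ℝ, IsCompact K →
      TendstoUniformlyOn (fun γ t => H γ t) (fun t => |t|) atTop K)
    (J : EuclideanSpace ℝ (Fin m) × EuclideanSpace ℝ (Fin n) ×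
      EuclideanSpace ℝ (Fin (n - 1)) → ℝ)
    (Jγ : ℝ → EuclideanSpace ℝ (Fin m) × EuclideanSpace ℝ (Fin n) ×
      EuclideanSpace ℝ (Fin (n - 1)) → ℝ)
    (hJ : ∀ y u w, J (y, u, w) =
      (1 / 2) * ((SH *ᵥ y - z) ⬝ᵥ (R⁻¹ *ᵥ (SH *ᵥ y - z))) +
      (1 / 2) * ((u - ub) ⬝ᵥ (B⁻¹ *ᵥ (u - ub))) + (μ / 2) * (w ⬝ᵥ w) +
      α * ∑ i, |(D *ᵥ u) i - w i| + β * ∑ i, |(E *ᵥ w) i|)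
    (hJγ : ∀ γ y u w, Jγ γ (y, u, w) =
      (1 / 2) * ((SH *ᵥ y - z) ⬝ᵥ (R⁻¹ *ᵥ (SH *ᵥ y - z))) +
      (1 / 2) * ((u - ub) ⬝ᵥ (B⁻¹ *ᵥ (u - ub))) + (μ / 2) * (w ⬝ᵥ w) +
      α * ∑ i, H γ ((D *ᵥ u) i - w i) + β * ∑ i, H γ ((E *ᵥ w) i))
    (γseq : ℕ → ℝ) (hγseq : Tendsto γseq atTop atTop)
    (Y : ℕ → EuclideanSpace ℝ (Fin m)) (Uc : ℕ → EuclideanSpace ℝ (Fin n))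
    (W : ℕ → EuclideanSpace ℝ (Fin (n - 1)))
    (hfeask : ∀ k, e (Y k) (Uc k) = 0)
    (hmink : ∀ k, ∀ y u w, e y u = 0 →
      Jγ (γseq k) (Y k, Uc k, W k) ≤ Jγ (γseq k) (y, u, w))
    (ystar : EuclideanSpace ℝ (Fin m)) (ustar : EuclideanSpace ℝ (Fin n))
    (wstar : EuclideanSpace ℝ (Fin (n - 1)))
    (hfeastar : e ystar ustar = 0)
    (hminstar : ∀ y u w, e y u = 0 → J (ystar, ustar, wstar) ≤ J (y, u, w)) :
    ∃ φ : ℕ → ℕ, StrictMono φ ∧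
      ∃ (ybar : EuclideanSpace ℝ (Fin m)) (ubar : EuclideanSpace ℝ (Fin n))
        (wbar : EuclideanSpace ℝ (Fin (n - 1))),
        Tendsto (fun j => (Y (φ j), Uc (φ j), W (φ j))) atTop
          (nhds (ybar, ubar, wbar)) ∧
        e ybar ubar = 0 ∧
        ∀ y u w, e y u = 0 → J (ybar, ubar, wbar) ≤ J (y, u, w) := by
  let T : TVAssimilation (Fin m) (Fin n) (Fin mo) (Fin (n - 1)) (Fin (n - 1)) :=
    ⟨SH, z, R⁻¹, B⁻¹, ub, μ, α, β, D, E⟩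
  obtain rfl : J = T.objective (|·|) := funext fun x => hJ x.1 x.2.1 x.2.2
  obtain rfl : Jγ = fun γ => T.objective (H γ) := funext₂ fun γ x => hJγ γ x.1 x.2.1 x.2.2
  have hHseq : TendstoLocallyUniformly (fun k => H (γseq k)) (|·|) atTop :=
    tendstoLocallyUniformly_iff_forall_isCompact.2 fun K hK V hV =>
      hγseq.eventually (hHunif K hK V hV)
  exact stmt_9_general T hR.inv.posSemidef hB.inv hμ hα.le hβ.le he_cont hapriori continuous_abs
    (fun k t => (hHbd (γseq k) t).1) hHseq hfeask hmink
end

section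
/- Let γ ≥ 1 and let ζ ∈ ℝ and q ∈ ℝ be given. Define the scalar Q₁(ζ, q) as follows: if γ|ζ| ≥ 1 + 1/(2γ) set Q₁ = 1/|ζ| − (q/max{1,|q|})·(ζ/|ζ|²); if γ|ζ| ≤ 1 − 1/(2γ) set Q₁ = γ; and if |γ|ζ| − 1| ≤ 1/(2γ) set Q₁ = (1 − (γ/2)θ²)·[1/|ζ| − (q/max{1,|q|})·(ζ/|ζ|²)] + γ²θ·(ζ/|ζ|)², where θ = 1 − γ|ζ| + 1/(2γ). Then Q₁(ζ, q) ≥ 0. -/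
/-!
For a dual variable `p` with `|p| ≤ 1` we have `p * ζ ≤ |ζ|`, so `1 / |ζ| - p * (ζ / |ζ| ^ 2)` is
nonnegative. On the transition regime `0 ≤ θ ≤ 1 / γ`, hence `(γ / 2) * θ ^ 2 ≤ 1 / (2 * γ) ≤ 1`,
and the entry is a sum of products of nonnegative factors.
-/

section

variable {𝕜 : Type*} [Field 𝕜] [LinearOrder 𝕜]

/-- The second-order coefficient `1 / |ζ| - p ζ / |ζ|²` of the unregularized absolute value at `ζ`
with dual variable `p`. At `ζ = 0` it takes the junk value `0`. -/
def primalDualCurvature (ζ p : 𝕜) : 𝕜 :=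
  1 / |ζ| - p * (ζ / |ζ| ^ 2)

/-- The quantity `θ` of the Huber regularization, which runs from `1 / γ` down to `0` while `γ|ζ|`
crosses the transition regime `[1 - 1 / (2γ), 1 + 1 / (2γ)]`. -/
def huberTransition (γ ζ : 𝕜) : 𝕜 :=
  1 - γ * |ζ| + 1 / (2 * γ)

/-- The diagonal entry `Q₁` of the primal-dual second-order matrix at `ζ`, as a function of the
already projected dual variable `p = q / max 1 |q|`. -/
def secondOrderEntry (γ ζ p : 𝕜) : 𝕜 :=
  if 1 + 1 / (2 * γ) ≤ γ * |ζ| then primalDualCurvature ζ p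
  else if γ * |ζ| ≤ 1 - 1 / (2 * γ) then γ
  else (1 - (γ / 2) * huberTransition γ ζ ^ 2) * primalDualCurvature ζ p +
    γ ^ 2 * huberTransition γ ζ * (ζ / |ζ|) ^ 2

variable [IsStrictOrderedRing 𝕜] {γ ζ p θ : 𝕜}

theorem abs_div_max_one_abs_le_one (q : 𝕜) : |(q / max 1 |q|)| ≤ 1 := by
  have max_pos : 0 < max 1 |q| := lt_max_of_lt_left one_pos
  rw [abs_div, abs_of_pos max_pos, div_le_one max_pos]
  exact le_max_right 1 |q|

theorem primalDualCurvature_nonneg (hp : |p| ≤ 1) : 0 ≤ primalDualCurvature ζ p := by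
  refine sub_nonneg.mpr ?_
  calc
    p * (ζ / |ζ| ^ 2) ≤ |p * (ζ / |ζ| ^ 2)| := le_abs_self _
    _ = |p| * (|ζ| / |ζ| ^ 2) := by rw [abs_mul, abs_div, abs_pow, abs_abs]
    _ ≤ 1 * (|ζ| / |ζ| ^ 2) := by gcongr
    _ = 1 / |ζ| := by rw [one_mul, sq, div_self_mul_self', one_div]

theorem huberTransition_nonneg (h : γ * |ζ| ≤ 1 + 1 / (2 * γ)) : 0 ≤ huberTransition γ ζ := by
  unfold huberTransition
  linarith

theorem mul_huberTransition_le_one (hγ : 0 < γ) (h : 1 - 1 / (2 * γ) ≤ γ * |ζ|) :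
    γ * huberTransition γ ζ ≤ 1 := by
  have le_sum : huberTransition γ ζ ≤ 1 / (2 * γ) + 1 / (2 * γ) := by
    unfold huberTransition
    linarith
  calc
    γ * huberTransition γ ζ ≤ γ * (1 / (2 * γ) + 1 / (2 * γ)) := by gcongr
    _ = 1 := by field_simp; norm_num

theorem half_mul_sq_le_one (hγ : 1 / 2 ≤ γ) (hθ : |γ * θ| ≤ 1) : γ / 2 * θ ^ 2 ≤ 1 := by
  have γ_pos : 0 < γ := one_half_pos.trans_le hγ
  calc
    γ / 2 * θ ^ 2 = (γ * θ) ^ 2 / (2 * γ) := by field_simp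
    _ ≤ 1 / (2 * γ) := by gcongr; exact (sq_le_one_iff_abs_le_one _).mpr hθ
    _ ≤ 1 := by rw [div_le_one (mul_pos two_pos γ_pos)]; linarith

theorem stmt_13_general (hγ : 1 / 2 ≤ γ) (hp : |p| ≤ 1) : 0 ≤ secondOrderEntry γ ζ p := by
  have γ_pos : 0 < γ := one_half_pos.trans_le hγ
  have curvature_nonneg : 0 ≤ primalDualCurvature ζ p := primalDualCurvature_nonneg hp
  unfold secondOrderEntry
  split_ifs with outer inner
  · exact curvature_nonneg
  · exact γ_pos.le
  · have θ_nonneg : 0 ≤ huberTransition γ ζ := huberTransition_nonneg (not_le.mp outer).le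
    have abs_mul_θ_le_one : |γ * huberTransition γ ζ| ≤ 1 := by
      rw [abs_of_nonneg (by positivity)]
      exact mul_huberTransition_le_one γ_pos (not_le.mp inner).le
    have weight_nonneg : 0 ≤ 1 - γ / 2 * huberTransition γ ζ ^ 2 :=
      sub_nonneg.mpr (half_mul_sq_le_one hγ abs_mul_θ_le_one)
    exact add_nonneg (mul_nonneg weight_nonneg curvature_nonneg) (by positivity)

end

/-- Nonnegativity of the diagonal entries of the projected
primal-dual second-order matrix `Q₁`: for `γ ≥ 1`, `ζ, q ∈ ℝ`, the scalar
`Q₁(ζ,q)` defined piecewise over the three Huber regimes is nonnegative. -/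
theorem stmt_13 (γ ζ q : ℝ) (hγ : 1 ≤ γ) (Q : ℝ)
    (hQ : Q = if 1 + 1 / (2 * γ) ≤ γ * |ζ| then
        1 / |ζ| - (q / max 1 |q|) * (ζ / |ζ| ^ 2)
      else if γ * |ζ| ≤ 1 - 1 / (2 * γ) then γ
      else
        (1 - (γ / 2) * (1 - γ * |ζ| + 1 / (2 * γ)) ^ 2) *
          (1 / |ζ| - (q / max 1 |q|) * (ζ / |ζ| ^ 2)) +
        γ ^ 2 * (1 - γ * |ζ| + 1 / (2 * γ)) * (ζ / |ζ|) ^ 2) :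
    0 ≤ Q := by
  rw [hQ]
  exact stmt_13_general (by linarith) (abs_div_max_one_abs_le_one q)
end

section
/- Let n, m ∈ ℕ, γ > 0, Δt > 0, μ > 0, α, β ≥ 0, ρ > 0, C_Ψ > 0. Let B ∈ ℝ^{n×n} be symmetric positive definite, D, E ∈ ℝ^{(n−1)×n}, let Q₁, Q₂ ∈ ℝ^{(n−1)×(n−1)} be diagonal with diagonal entries in [0, γ], let Ψ ∈ ℝ^{m×m} be symmetric positive semidefinite with operator norm ‖Ψ‖ ≤ C_Ψ, let Ξ ∈ ℝ^{m×m} be invertible with ‖Ξ⁻¹‖ ≤ ρ, and let ϒ ∈ ℝ^{m×n} with ‖ϒ‖ ≤ 1/Δt. Define Π = [[B⁻¹ + α DᵀQ₁D + ϒᵀΞ⁻ᵀΨΞ⁻¹ϒ, −α DᵀQ₁], [−α Q₁D, μ I + α Q₁ + β EᵀQ₂E]]. Then with m₀ := min{λ_min(B⁻¹), μ} > 0 and M₀ := max{λ_max(B⁻¹) + 2αγ‖D‖² + ρ²C_Ψ/Δt², μ + 2αγ + βγ‖E‖²}, one has m₀ ‖q‖₂² ≤ qᵀ Π q ≤ M₀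 ‖q‖₂² for every q ∈ ℝ^{2n−1}. -/
open Matrix

/-- The spectral (operator `ℓ²→ℓ²`) norm of a real matrix. -/
noncomputable def matOpNorm {k l : ℕ} (A : Matrix (Fin k) (Fin l) ℝ) : ℝ :=
  ‖LinearMap.toContinuousLinearMap (Matrix.toEuclideanLin A)‖

/-!
Writing `q = (x, y)`, the `Q₁`-terms of `qᵀΠq` complete to a square, so that `qᵀΠq` equals
`xᵀB⁻¹x + α (Dx - y)ᵀQ₁(Dx - y) + (Ξ⁻¹Υx)ᵀΨ(Ξ⁻¹Υx) + μ ‖y‖² + β (Ey)ᵀQ₂(Ey)`.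
For the lower bound the three semidefinite terms are discarded. For the upper bound the
parallelogram identity decouples `Dx` from `y`, which is the source of the factor `2`, and every
remaining term is bounded by operator norms.
-/

section QuadraticForm

variable {ι κ R : Type*} [Fintype ι] [Fintype κ]

lemma dotProduct_transpose_mul_mul_mulVec [CommSemiring R] (A : Matrix κ ι R) (M : Matrix κ κ R)
    (x : ι → R) : x ⬝ᵥ (Aᵀ * M * A) *ᵥ x = (A *ᵥ x) ⬝ᵥ M *ᵥ (A *ᵥ x) := by
  rw [← mulVec_mulVec, ← mulVec_mulVec, dotProduct_mulVec, vecMul_transpose]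

lemma dotProduct_mulVec_comm_of_isSymm [CommSemiring R] {M : Matrix ι ι R} (hM : M.IsSymm)
    (x y : ι → R) : x ⬝ᵥ M *ᵥ y = y ⬝ᵥ M *ᵥ x := by
  rw [dotProduct_mulVec, ← mulVec_transpose, hM.eq, dotProduct_comm]

lemma dotProduct_mulVec_self_nonneg_of_posSemidef {M : Matrix ι ι ℝ} (hM : M.PosSemidef)
    (x : ι → ℝ) : 0 ≤ x ⬝ᵥ M *ᵥ x := by
  simpa only [star_trivial] using hM.dotProduct_mulVec_nonneg x

lemma sub_dotProduct_mulVec_sub_le {M : Matrix ι ι ℝ} (hM : M.PosSemidef) (x y : ι → ℝ) :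
    (x - y) ⬝ᵥ M *ᵥ (x - y) ≤ 2 * (x ⬝ᵥ M *ᵥ x) + 2 * (y ⬝ᵥ M *ᵥ y) := by
  have parallelogram : (x - y) ⬝ᵥ M *ᵥ (x - y) + (x + y) ⬝ᵥ M *ᵥ (x + y) =
      2 * (x ⬝ᵥ M *ᵥ x) + 2 * (y ⬝ᵥ M *ᵥ y) := by
    simp only [mulVec_sub, mulVec_add, dotProduct_sub, dotProduct_add, sub_dotProduct,
      add_dotProduct]
    ring
  linarith [dotProduct_mulVec_self_nonneg_of_posSemidef hM (x + y)]

end QuadraticForm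

section Eigenvalues

open scoped MatrixOrder

variable {ι : Type*} [Fintype ι] [DecidableEq ι] {A : Matrix ι ι ℝ} {c : ℝ}

lemma mul_dotProduct_self_le_of_le_eigenvalues (hA : A.IsHermitian)
    (hc : ∀ i, c ≤ hA.eigenvalues i) (x : ι → ℝ) : c * (x ⬝ᵥ x) ≤ x ⬝ᵥ A *ᵥ x := by
  have hcA : algebraMap ℝ (Matrix ι ι ℝ) c ≤ A := by
    rw [algebraMap_le_iff_le_spectrum (ha := hA.isSelfAdjoint),
      hA.spectrum_real_eq_range_eigenvalues]
    exact Set.forall_mem_range.2 hc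
  simpa [Algebra.algebraMap_eq_smul_one, sub_mulVec, smul_mulVec] using
    dotProduct_mulVec_self_nonneg_of_posSemidef (Matrix.le_iff.1 hcA) x

lemma dotProduct_mulVec_self_le_of_eigenvalues_le (hA : A.IsHermitian)
    (hc : ∀ i, hA.eigenvalues i ≤ c) (x : ι → ℝ) : x ⬝ᵥ A *ᵥ x ≤ c * (x ⬝ᵥ x) := by
  have hAc : A ≤ algebraMap ℝ (Matrix ι ι ℝ) c := by
    rw [le_algebraMap_iff_spectrum_le (ha := hA.isSelfAdjoint),
      hA.spectrum_real_eq_range_eigenvalues]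
    exact Set.forall_mem_range.2 hc
  simpa [Algebra.algebraMap_eq_smul_one, sub_mulVec, smul_mulVec] using
    dotProduct_mulVec_self_nonneg_of_posSemidef (Matrix.le_iff.1 hAc) x

end Eigenvalues

section OperatorNorm

open scoped Matrix.Norms.L2Operator

variable {ι κ : Type*} [Fintype ι] [DecidableEq ι] [Fintype κ]

lemma dotProduct_self_eq_norm_toLp_sq (x : κ → ℝ) : x ⬝ᵥ x = ‖WithLp.toLp 2 x‖ ^ 2 := by
  simp only [EuclideanSpace.real_norm_sq_eq, dotProduct, ← pow_two]

lemma mulVec_dotProduct_mulVec_le {A : Matrix κ ι ℝ} {a : ℝ} (hA : ‖A‖ ≤ a) (x : ι → ℝ) :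
    (A *ᵥ x) ⬝ᵥ (A *ᵥ x) ≤ a ^ 2 * (x ⬝ᵥ x) := by
  rw [dotProduct_self_eq_norm_toLp_sq, dotProduct_self_eq_norm_toLp_sq, ← mul_pow]
  gcongr
  exact (l2_opNorm_mulVec A (WithLp.toLp 2 x)).trans (by gcongr)

lemma dotProduct_mulVec_self_le_of_l2_opNorm_le {M : Matrix ι ι ℝ} {c : ℝ} (hM : ‖M‖ ≤ c)
    (x : ι → ℝ) : x ⬝ᵥ M *ᵥ x ≤ c * (x ⬝ᵥ x) := by
  calc
    x ⬝ᵥ M *ᵥ x = inner ℝ (WithLp.toLp 2 (M *ᵥ x)) (WithLp.toLp 2 x) := by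
      simp [EuclideanSpace.inner_eq_star_dotProduct]
    _ ≤ ‖WithLp.toLp 2 (M *ᵥ x)‖ * ‖WithLp.toLp 2 x‖ := real_inner_le_norm _ _
    _ ≤ (c * ‖WithLp.toLp 2 x‖) * ‖WithLp.toLp 2 x‖ := by
      gcongr
      exact (l2_opNorm_mulVec M (WithLp.toLp 2 x)).trans (by gcongr)
    _ = c * (x ⬝ᵥ x) := by rw [dotProduct_self_eq_norm_toLp_sq]; ring

lemma mulVec_dotProduct_mulVec_mulVec_le [DecidableEq κ] {M : Matrix κ κ ℝ} {A : Matrix κ ι ℝ}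
    {a c : ℝ} (hM : ‖M‖ ≤ c) (hA : ‖A‖ ≤ a) (x : ι → ℝ) :
    (A *ᵥ x) ⬝ᵥ M *ᵥ (A *ᵥ x) ≤ c * a ^ 2 * (x ⬝ᵥ x) := by
  have hc : 0 ≤ c := (norm_nonneg M).trans hM
  calc
    (A *ᵥ x) ⬝ᵥ M *ᵥ (A *ᵥ x) ≤ c * ((A *ᵥ x) ⬝ᵥ (A *ᵥ x)) :=
      dotProduct_mulVec_self_le_of_l2_opNorm_le hM _
    _ ≤ c * (a ^ 2 * (x ⬝ᵥ x)) := by gcongr; exact mulVec_dotProduct_mulVec_le hA x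
    _ = c * a ^ 2 * (x ⬝ᵥ x) := (mul_assoc _ _ _).symm

lemma l2_opNorm_diagonal_le_of_mem_Icc {d : ι → ℝ} {c : ℝ} (hc : 0 ≤ c)
    (hd : ∀ i, d i ∈ Set.Icc 0 c) : ‖diagonal d‖ ≤ c := by
  rw [l2_opNorm_diagonal, pi_norm_le_iff_of_nonneg hc]
  exact fun i ↦ (Real.norm_of_nonneg (hd i).1).trans_le (hd i).2

end OperatorNorm

section ReducedNewtonMatrix

variable {n p r k m : Type*} [Fintype n] [Fintype p] [DecidableEq p] [Fintype r] [Fintype k]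
  [Fintype m]

/-- The reduced second-order iteration matrix `Π` of the primal-dual Newton method. The arguments
`A` and `X` stand for `B⁻¹` and `Ξ⁻¹`; no inverse is taken, and `X` may be rectangular. -/
def reducedNewtonMatrix (μ α β : ℝ) (A : Matrix n n ℝ) (D : Matrix p n ℝ) (E : Matrix r p ℝ)
    (Q₁ : Matrix p p ℝ) (Q₂ : Matrix r r ℝ) (Ψ : Matrix m m ℝ) (X : Matrix m k ℝ)
    (Υ : Matrix k n ℝ) : Matrix (n ⊕ p) (n ⊕ p) ℝ :=
  fromBlocks
    (A + α • (Dᵀ * Q₁ * D) + Υᵀ * Xᵀ * Ψ * X * Υ)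
    (-(α • (Dᵀ * Q₁)))
    (-(α • (Q₁ * D)))
    (μ • (1 : Matrix p p ℝ) + α • Q₁ + β • (Eᵀ * Q₂ * E))

lemma sumElim_dotProduct_reducedNewtonMatrix_mulVec (μ α β : ℝ) (A : Matrix n n ℝ)
    (D : Matrix p n ℝ) (E : Matrix r p ℝ) {Q₁ : Matrix p p ℝ} (hQ₁ : Q₁.IsSymm)
    (Q₂ : Matrix r r ℝ) (Ψ : Matrix m m ℝ) (X : Matrix m k ℝ) (Υ : Matrix k n ℝ)
    (x : n → ℝ) (y : p → ℝ) :
    Sum.elim x y ⬝ᵥ reducedNewtonMatrix μ α β A D E Q₁ Q₂ Ψ X Υ *ᵥ Sum.elim x y =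
      x ⬝ᵥ A *ᵥ x + α * ((D *ᵥ x - y) ⬝ᵥ Q₁ *ᵥ (D *ᵥ x - y)) +
        ((X * Υ) *ᵥ x) ⬝ᵥ Ψ *ᵥ ((X * Υ) *ᵥ x) + μ * (y ⬝ᵥ y) +
        β * ((E *ᵥ y) ⬝ᵥ Q₂ *ᵥ (E *ᵥ y)) := by
  have misfit_eq : Υᵀ * Xᵀ * Ψ * X * Υ = (X * Υ)ᵀ * Ψ * (X * Υ) := by
    simp only [transpose_mul, Matrix.mul_assoc]
  have upper_right : x ⬝ᵥ (Dᵀ * Q₁) *ᵥ y = (D *ᵥ x) ⬝ᵥ Q₁ *ᵥ y := by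
    rw [← mulVec_mulVec, dotProduct_mulVec, vecMul_transpose]
  have lower_left : y ⬝ᵥ (Q₁ * D) *ᵥ x = (D *ᵥ x) ⬝ᵥ Q₁ *ᵥ y := by
    rw [← mulVec_mulVec, dotProduct_mulVec_comm_of_isSymm hQ₁]
  rw [reducedNewtonMatrix, misfit_eq, fromBlocks_mulVec]
  simp only [Sum.elim_comp_inl, Sum.elim_comp_inr, sumElim_dotProduct_sumElim, add_mulVec,
    neg_mulVec, smul_mulVec, one_mulVec, dotProduct_add, dotProduct_neg, dotProduct_smul,
    smul_eq_mul, dotProduct_transpose_mul_mul_mulVec, upper_right, lower_left, mulVec_sub,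
    dotProduct_sub, sub_dotProduct, dotProduct_mulVec_comm_of_isSymm hQ₁ y]
  ring

variable {μ α β γ ρ υ CΨ : ℝ} {A : Matrix n n ℝ} {Q₁ : Matrix p p ℝ} {Q₂ : Matrix r r ℝ}
  {Ψ : Matrix m m ℝ} {X : Matrix m k ℝ} {Υ : Matrix k n ℝ}

lemma le_sumElim_dotProduct_reducedNewtonMatrix_mulVec (hα : 0 ≤ α) (hβ : 0 ≤ β)
    (D : Matrix p n ℝ) (E : Matrix r p ℝ) (hQ₁ : Q₁.PosSemidef) (hQ₂ : Q₂.PosSemidef)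
    (hΨ : Ψ.PosSemidef) (x : n → ℝ) (y : p → ℝ) :
    x ⬝ᵥ A *ᵥ x + μ * (y ⬝ᵥ y) ≤
      Sum.elim x y ⬝ᵥ reducedNewtonMatrix μ α β A D E Q₁ Q₂ Ψ X Υ *ᵥ Sum.elim x y := by
  have Q₁_symm : Q₁.IsSymm := isHermitian_iff_isSymm.1 hQ₁.isHermitian
  rw [sumElim_dotProduct_reducedNewtonMatrix_mulVec (hQ₁ := Q₁_symm)]
  have coupling_nonneg :=
    mul_nonneg hα (dotProduct_mulVec_self_nonneg_of_posSemidef hQ₁ (D *ᵥ x - y))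
  have misfit_nonneg := dotProduct_mulVec_self_nonneg_of_posSemidef hΨ ((X * Υ) *ᵥ x)
  have second_order_nonneg :=
    mul_nonneg hβ (dotProduct_mulVec_self_nonneg_of_posSemidef hQ₂ (E *ᵥ y))
  linarith

open scoped Matrix.Norms.L2Operator

variable [DecidableEq n] [DecidableEq r] [DecidableEq k] [DecidableEq m]

lemma sumElim_dotProduct_reducedNewtonMatrix_mulVec_le (hα : 0 ≤ α) (hβ : 0 ≤ β)
    (D : Matrix p n ℝ) (E : Matrix r p ℝ) (hQ₁ : Q₁.PosSemidef) (hQ₁γ : ‖Q₁‖ ≤ γ)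
    (hQ₂γ : ‖Q₂‖ ≤ γ) (hΨC : ‖Ψ‖ ≤ CΨ) (hXρ : ‖X‖ ≤ ρ) (hΥυ : ‖Υ‖ ≤ υ)
    (x : n → ℝ) (y : p → ℝ) :
    Sum.elim x y ⬝ᵥ reducedNewtonMatrix μ α β A D E Q₁ Q₂ Ψ X Υ *ᵥ Sum.elim x y ≤
      x ⬝ᵥ A *ᵥ x + (2 * α * γ * ‖D‖ ^ 2 + ρ ^ 2 * CΨ * υ ^ 2) * (x ⬝ᵥ x) +
        (μ + 2 * α * γ + β * γ * ‖E‖ ^ 2) * (y ⬝ᵥ y) := by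
  have Q₁_symm : Q₁.IsSymm := isHermitian_iff_isSymm.1 hQ₁.isHermitian
  rw [sumElim_dotProduct_reducedNewtonMatrix_mulVec (hQ₁ := Q₁_symm)]
  have coupling_le : (D *ᵥ x - y) ⬝ᵥ Q₁ *ᵥ (D *ᵥ x - y) ≤
      2 * (γ * ‖D‖ ^ 2 * (x ⬝ᵥ x)) + 2 * (γ * (y ⬝ᵥ y)) :=
    (sub_dotProduct_mulVec_sub_le hQ₁ _ _).trans <| by
      gcongr
      · exact mulVec_dotProduct_mulVec_mulVec_le hQ₁γ le_rfl x
      · exact dotProduct_mulVec_self_le_of_l2_opNorm_le hQ₁γ y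
  have norm_mul_le : ‖X * Υ‖ ≤ ρ * υ :=
    (l2_opNorm_mul X Υ).trans <|
      mul_le_mul hXρ hΥυ (norm_nonneg _) ((norm_nonneg _).trans hXρ)
  have misfit_le := mulVec_dotProduct_mulVec_mulVec_le hΨC norm_mul_le x
  have second_order_le := mulVec_dotProduct_mulVec_mulVec_le hQ₂γ (le_refl ‖E‖) y
  linarith [mul_le_mul_of_nonneg_left coupling_le hα, mul_le_mul_of_nonneg_left second_order_le hβ]

theorem stmt_14_general [Nonempty n] (hα : 0 ≤ α) (hβ : 0 ≤ β) (hA : A.IsHermitian)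
    (D : Matrix p n ℝ) (E : Matrix r p ℝ) (hQ₁ : Q₁.PosSemidef) (hQ₁γ : ‖Q₁‖ ≤ γ)
    (hQ₂ : Q₂.PosSemidef) (hQ₂γ : ‖Q₂‖ ≤ γ) (hΨ : Ψ.PosSemidef) (hΨC : ‖Ψ‖ ≤ CΨ)
    (hXρ : ‖X‖ ≤ ρ) (hΥυ : ‖Υ‖ ≤ υ) (q : EuclideanSpace ℝ (n ⊕ p)) :
    min (Finset.univ.inf' Finset.univ_nonempty hA.eigenvalues) μ * ‖q‖ ^ 2 ≤
        q ⬝ᵥ reducedNewtonMatrix μ α β A D E Q₁ Q₂ Ψ X Υ *ᵥ q ∧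
      q ⬝ᵥ reducedNewtonMatrix μ α β A D E Q₁ Q₂ Ψ X Υ *ᵥ q ≤
        max (Finset.univ.sup' Finset.univ_nonempty hA.eigenvalues + 2 * α * γ * ‖D‖ ^ 2 +
            ρ ^ 2 * CΨ * υ ^ 2)
          (μ + 2 * α * γ + β * γ * ‖E‖ ^ 2) * ‖q‖ ^ 2 := by
  obtain ⟨x, y, hq⟩ : ∃ x y, q.ofLp = Sum.elim x y := ⟨_, _, (Sum.elim_comp_inl_inr q.ofLp).symm⟩
  have norm_sq_eq : ‖q‖ ^ 2 = x ⬝ᵥ x + y ⬝ᵥ y := by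
    rw [← sumElim_dotProduct_sumElim, ← hq, dotProduct_self_eq_norm_toLp_sq]
  have hx : 0 ≤ x ⬝ᵥ x := by simpa using dotProduct_self_star_nonneg x
  have hy : 0 ≤ y ⬝ᵥ y := by simpa using dotProduct_self_star_nonneg y
  have rayleigh_ge :
      Finset.univ.inf' Finset.univ_nonempty hA.eigenvalues * (x ⬝ᵥ x) ≤ x ⬝ᵥ A *ᵥ x :=
    mul_dotProduct_self_le_of_le_eigenvalues hA (fun i ↦ Finset.inf'_le _ (Finset.mem_univ i)) x
  have rayleigh_le :
      x ⬝ᵥ A *ᵥ x ≤ Finset.univ.sup' Finset.univ_nonempty hA.eigenvalues * (x ⬝ᵥ x) :=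
    dotProduct_mulVec_self_le_of_eigenvalues_le hA (fun i ↦ Finset.le_sup' _ (Finset.mem_univ i)) x
  rw [norm_sq_eq, hq, mul_add, mul_add]
  constructor
  · refine le_trans ?_ (le_sumElim_dotProduct_reducedNewtonMatrix_mulVec hα hβ D E hQ₁ hQ₂ hΨ x y)
    gcongr
    · exact (mul_le_mul_of_nonneg_right (min_le_left _ _) hx).trans rayleigh_ge
    · exact min_le_right _ _
  · refine (sumElim_dotProduct_reducedNewtonMatrix_mulVec_le hα hβ D E hQ₁ hQ₁γ hQ₂γ hΨC hXρ hΥυ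
      x y).trans ?_
    gcongr
    · refine le_trans ?_ (mul_le_mul_of_nonneg_right (le_max_left _ _) hx)
      linarith
    · exact le_max_right _ _

end ReducedNewtonMatrix

/-- Uniform two-sided spectral bounds for the reduced Newton
matrix `Π`: `m₀‖q‖² ≤ qᵀΠq ≤ M₀‖q‖²` with `m₀ = min{λ_min(B⁻¹), μ} > 0` and
`M₀ = max{λ_max(B⁻¹) + 2αγ‖D‖² + ρ²C_Ψ/Δt², μ + 2αγ + βγ‖E‖²}`. -/
theorem stmt_14 (n m : ℕ) (hn : 0 < n)
    (γ Δt μ α β ρ CΨ : ℝ) (hγ : 0 < γ) (hΔt : 0 < Δt) (hμ : 0 < μ)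
    (hα : 0 ≤ α) (hβ : 0 ≤ β) (hρ : 0 < ρ) (hCΨ : 0 < CΨ)
    (B : Matrix (Fin n) (Fin n) ℝ) (hB : B.PosDef)
    (D : Matrix (Fin (n - 1)) (Fin n) ℝ) (E : Matrix (Fin (n - 1)) (Fin (n - 1)) ℝ)
    (q₁ q₂ : Fin (n - 1) → ℝ)
    (hq₁ : ∀ i, q₁ i ∈ Set.Icc 0 γ) (hq₂ : ∀ i, q₂ i ∈ Set.Icc 0 γ)
    (Q₁ Q₂ : Matrix (Fin (n - 1)) (Fin (n - 1)) ℝ)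
    (hQ₁ : Q₁ = Matrix.diagonal q₁) (hQ₂ : Q₂ = Matrix.diagonal q₂)
    (Ψ : Matrix (Fin m) (Fin m) ℝ) (hΨ : Ψ.PosSemidef) (hΨnorm : matOpNorm Ψ ≤ CΨ)
    (Ξ : Matrix (Fin m) (Fin m) ℝ) (hΞ : IsUnit Ξ.det) (hΞnorm : matOpNorm Ξ⁻¹ ≤ ρ)
    (Υ : Matrix (Fin m) (Fin n) ℝ) (hΥnorm : matOpNorm Υ ≤ 1 / Δt)
    (P : Matrix (Fin n ⊕ Fin (n - 1)) (Fin n ⊕ Fin (n - 1)) ℝ)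
    (hP : P = Matrix.fromBlocks
      (B⁻¹ + α • (Dᵀ * Q₁ * D) + Υᵀ * (Ξ⁻¹)ᵀ * Ψ * Ξ⁻¹ * Υ)
      (-(α • (Dᵀ * Q₁)))
      (-(α • (Q₁ * D)))
      (μ • (1 : Matrix (Fin (n - 1)) (Fin (n - 1)) ℝ) + α • Q₁ + β • (Eᵀ * Q₂ * E))) :
    0 < min (Finset.univ.inf' (Finset.univ_nonempty_iff.mpr (Fin.pos_iff_nonempty.mp hn))
        hB.inv.1.eigenvalues) μ ∧
    ∀ q : EuclideanSpace ℝ (Fin n ⊕ Fin (n - 1)),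
      min (Finset.univ.inf' (Finset.univ_nonempty_iff.mpr (Fin.pos_iff_nonempty.mp hn))
          hB.inv.1.eigenvalues) μ * ‖q‖ ^ 2 ≤ q ⬝ᵥ (P *ᵥ q) ∧
      q ⬝ᵥ (P *ᵥ q) ≤
        max ((Finset.univ.sup' (Finset.univ_nonempty_iff.mpr (Fin.pos_iff_nonempty.mp hn))
            hB.inv.1.eigenvalues) + 2 * α * γ * matOpNorm D ^ 2 + ρ ^ 2 * CΨ / Δt ^ 2)
          (μ + 2 * α * γ + β * γ * matOpNorm E ^ 2) * ‖q‖ ^ 2 := by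
  subst hQ₁ hQ₂ hP
  have : Nonempty (Fin n) := Fin.pos_iff_nonempty.mp hn
  refine ⟨lt_min ((Finset.lt_inf'_iff _).2 fun i _ ↦ hB.inv.eigenvalues_pos i) hμ, fun q ↦ ?_⟩
  rw [div_eq_mul_one_div, ← _root_.one_div_pow]
  -- `matOpNorm` unfolds to the norm of the scope `Matrix.Norms.L2Operator`.
  exact stmt_14_general hα hβ hB.inv.isHermitian D E
    (.diagonal fun i ↦ (hq₁ i).1) (l2_opNorm_diagonal_le_of_mem_Icc hγ.le hq₁)
    (.diagonal fun i ↦ (hq₂ i).1) (l2_opNorm_diagonal_le_of_mem_Icc hγ.le hq₂)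
    hΨ hΨnorm hΞnorm hΥnorm q
end

section
/- Let N ∈ ℕ, let f : ℝ^N → ℝ be differentiable, and let K ⊆ ℝ^N be a set on which ∇f is uniformly continuous. Let c₁ ∈ (0,1), τ ∈ (0,1), and let (x_k) ⊆ K, nonzero directions (d_k) with ∇f(x_k)ᵀd_k < 0, and step lengths s_k > 0 be sequences such that: (a) the Armijo condition holds, f(x_k + s_k d_k) ≤ f(x_k) + c₁ s_k ∇f(x_k)ᵀ d_k; (b) for every k, either s_k = 1, or there exists a failed trial step ŝ_k with s_k ≥ τ ŝ_k, f(x_k + ŝ_k d_k) > f(x_k) + c₁ ŝ_k ∇f(x_k)ᵀ d_k, and x_k + t d_k ∈ K for all t ∈ [0, ŝ_k]; (c) there is a nondecreasing continuous function φ : [0,∞) → [0,∞) with φ(ε) > φ(0) ≥ 0 for all ε > 0 such that ‖d_k‖ ≥ φ((−∇f(x_k)ᵀd_k)/‖d_k‖) for all k. If f(x_k + s_k d_k) − f(x_k) → 0 as k → ∞, then (∇f(x_k)ᵀ d_k)/‖d_k‖ → 0. -/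
open scoped RealInnerProductSpace
open Filter

/-!
Suppose the normalized slope `-⟪∇f(x), d⟫ / ‖d‖` is at least `ε`. Then the displacement `s * ‖d‖` is
bounded below by a constant depending only on `ε`: for `s = 1` this is the angle condition, and
otherwise, by the mean value theorem, a rejected trial step forces `∇f` to vary by more than
`(1 - c) * ε` along the trial segment, so that the segment has at least the length given by uniform
continuity. The Armijo condition turns slope times displacement into decrease of `f`, so the slope
can stay above `ε` only while the decrease does not become small.
-/

section ArmijoBacktracking

variable {E : Type*} [NormedAddCommGroup E] [InnerProductSpace ℝ E] [CompleteSpace E]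
  {f : E → ℝ} {K : Set E} {c τ s t ε : ℝ} {x d g : E}

/-- The rate of decrease of `f` at `x` per unit length in the direction `d`, which measures how far
`x` is from being stationary along `d`. It is `0` for `d = 0`. -/
noncomputable def descentSlope (f : E → ℝ) (x d : E) : ℝ :=
  (-⟪gradient f x, d⟫) / ‖d‖

/-- The Armijo (sufficient decrease) condition with parameter `c` for the step length `s` from `x`
in the direction `d`. -/
def ArmijoCondition (f : E → ℝ) (c : ℝ) (x d : E) (s : ℝ) : Prop :=
  f (x + s • d) ≤ f x + c * s * ⟪gradient f x, d⟫

/-- The outcome of backtracking from the initial step length `1`: either `s` is the initial step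
length, or it is at least the fraction `τ` of a trial step length that was rejected by the Armijo
test. The trial segment is required to lie in `K`, where the gradient will be controlled. -/
def IsBacktrackingStep (f : E → ℝ) (K : Set E) (c τ : ℝ) (x d : E) (s : ℝ) : Prop :=
  s = 1 ∨ ∃ r : ℝ, 0 < r ∧ τ * r ≤ s ∧ ¬ArmijoCondition f c x d r ∧
    ∀ t ∈ Set.Icc (0 : ℝ) r, x + t • d ∈ K

theorem descentSlope_mul_norm (f : E → ℝ) (x d : E) :
    descentSlope f x d * ‖d‖ = -⟪gradient f x, d⟫ := by
  rcases eq_or_ne d 0 with rfl | hd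
  · simp
  · exact div_mul_cancel₀ _ (norm_ne_zero_iff.2 hd)

theorem ArmijoCondition.mul_descentSlope_le_sub (h : ArmijoCondition f c x d s) :
    c * (s * ‖d‖) * descentSlope f x d ≤ f x - f (x + s • d) :=
  calc c * (s * ‖d‖) * descentSlope f x d
      = c * s * (descentSlope f x d * ‖d‖) := by ring
    _ = -(c * s * ⟪gradient f x, d⟫) := by rw [descentSlope_mul_norm, mul_neg]
    _ ≤ f x - f (x + s • d) := by
        rw [ArmijoCondition] at h
        linarith only [h]

theorem hasDerivAt_comp_add_smul_of_hasGradientAt (h : HasGradientAt f g (x + t • d)) :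
    HasDerivAt (fun t : ℝ => f (x + t • d)) ⟪g, d⟫ t := by
  have hline : HasDerivAt (fun t : ℝ => x + t • d) d t := by
    simpa using ((hasDerivAt_id t).smul_const d).const_add x
  exact h.hasFDerivAt.comp_hasDerivAt t hline

theorem exists_inner_gradient_mul_eq_sub (hs : 0 < s)
    (hf : ∀ t ∈ Set.Icc 0 s, DifferentiableAt ℝ f (x + t • d)) :
    ∃ t ∈ Set.Ioo 0 s, ⟪gradient f (x + t • d), d⟫ * s = f (x + s • d) - f x := by
  have hderiv (t : ℝ) (ht : t ∈ Set.Icc 0 s) :=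
    hasDerivAt_comp_add_smul_of_hasGradientAt (hf t ht).hasGradientAt
  obtain ⟨t, ht, hslope⟩ := exists_hasDerivAt_eq_slope (fun t : ℝ => f (x + t • d)) _ hs
    (fun t ht => (hderiv t ht).continuousAt.continuousWithinAt)
    (fun t ht => hderiv t (Set.Ioo_subset_Icc_self ht))
  exact ⟨t, ht, by simpa [eq_div_iff hs.ne'] using hslope⟩

theorem exists_mul_descentSlope_lt_norm_gradient_sub (hs : 0 < s)
    (hf : ∀ t ∈ Set.Icc 0 s, DifferentiableAt ℝ f (x + t • d))
    (hfail : ¬ArmijoCondition f c x d s) :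
    ∃ t ∈ Set.Ioo 0 s,
      (1 - c) * descentSlope f x d < ‖gradient f (x + t • d) - gradient f x‖ := by
  obtain ⟨t, ht, hmean⟩ := exists_inner_gradient_mul_eq_sub hs hf
  have hinner : c * ⟪gradient f x, d⟫ < ⟪gradient f (x + t • d), d⟫ := by
    refine lt_of_mul_lt_mul_right ?_ hs.le
    linarith only [not_le.1 hfail, hmean]
  refine ⟨t, ht, lt_of_mul_lt_mul_right ?_ (norm_nonneg d)⟩
  calc (1 - c) * descentSlope f x d * ‖d‖
      = c * ⟪gradient f x, d⟫ - ⟪gradient f x, d⟫ := by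
        rw [mul_assoc, descentSlope_mul_norm]; ring
    _ < ⟪gradient f (x + t • d), d⟫ - ⟪gradient f x, d⟫ := sub_lt_sub_right hinner _
    _ = ⟪gradient f (x + t • d) - gradient f x, d⟫ := (inner_sub_left _ _ _).symm
    _ ≤ ‖gradient f (x + t • d) - gradient f x‖ * ‖d‖ := real_inner_le_norm _ _

theorem exists_pos_forall_le_mul_norm_of_not_armijoCondition
    (hf : ∀ y ∈ K, DifferentiableAt ℝ f y) (hgrad : UniformContinuousOn (gradient f) K)
    (hc : c < 1) (hε : 0 < ε) :
    ∃ δ > 0, ∀ x d : E, ∀ s > 0, (∀ t ∈ Set.Icc 0 s, x + t • d ∈ K) →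
      ¬ArmijoCondition f c x d s → ε ≤ descentSlope f x d → δ ≤ s * ‖d‖ := by
  have hc' : 0 < 1 - c := sub_pos.2 hc
  obtain ⟨δ, hδ, hclose⟩ := Metric.uniformContinuousOn_iff.1 hgrad _ (mul_pos hc' hε)
  refine ⟨δ, hδ, fun x d s hs hK hfail hslope => ?_⟩
  obtain ⟨t, ht, hvar⟩ :=
    exists_mul_descentSlope_lt_norm_gradient_sub hs (fun t ht => hf _ (hK t ht)) hfail
  have hxK : x ∈ K := by simpa using hK 0 (Set.left_mem_Icc.2 hs.le)
  by_contra! hshort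
  have hdist : dist (x + t • d) x < δ :=
    calc dist (x + t • d) x = t * ‖d‖ := by
          rw [dist_self_add_left, norm_smul, Real.norm_of_nonneg ht.1.le]
      _ ≤ s * ‖d‖ := by gcongr; exact ht.2.le
      _ < δ := hshort
  have hgrad_close : ‖gradient f (x + t • d) - gradient f x‖ < (1 - c) * ε := by
    simpa only [dist_eq_norm] using hclose _ (hK t (Set.Ioo_subset_Icc_self ht)) x hxK hdist
  exact (hvar.trans hgrad_close).not_ge (mul_le_mul_of_nonneg_left hslope hc'.le)

theorem exists_pos_forall_le_mul_norm_of_isBacktrackingStep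
    (hf : ∀ y ∈ K, DifferentiableAt ℝ f y) (hgrad : UniformContinuousOn (gradient f) K)
    (hc : c < 1) (hτ : 0 < τ) {φ : ℝ → ℝ} (hφmono : MonotoneOn φ (Set.Ioi 0))
    (hφpos : ∀ ε > 0, 0 < φ ε) (hε : 0 < ε) :
    ∃ m > 0, ∀ x d : E, ∀ s, IsBacktrackingStep f K c τ x d s →
      φ (descentSlope f x d) ≤ ‖d‖ → ε ≤ descentSlope f x d → m ≤ s * ‖d‖ := by
  obtain ⟨δ, hδ, hlong⟩ :=
    exists_pos_forall_le_mul_norm_of_not_armijoCondition hf hgrad hc hε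
  refine ⟨min (φ ε) (τ * δ), lt_min (hφpos ε hε) (mul_pos hτ hδ), ?_⟩
  rintro x d s (rfl | ⟨r, hr, hrs, hfail, hK⟩) hangle hslope
  · calc min (φ ε) (τ * δ) ≤ φ ε := min_le_left _ _
      _ ≤ φ (descentSlope f x d) := hφmono hε (hε.trans_le hslope) hslope
      _ ≤ 1 * ‖d‖ := by rwa [one_mul]
  · calc min (φ ε) (τ * δ) ≤ τ * δ := min_le_right _ _
      _ ≤ τ * (r * ‖d‖) := by gcongr; exact hlong x d r hr hK hfail hslope
      _ = τ * r * ‖d‖ := (mul_assoc _ _ _).symm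
      _ ≤ s * ‖d‖ := by gcongr

theorem stmt_16_general {ι : Type*} {l : Filter ι}
    (hf : ∀ y ∈ K, DifferentiableAt ℝ f y) (hgrad : UniformContinuousOn (gradient f) K)
    (hc : c ∈ Set.Ioo 0 1) (hτ : 0 < τ) {x d : ι → E} {s : ι → ℝ}
    (hdesc : ∀ k, ⟪gradient f (x k), d k⟫ < 0)
    (harmijo : ∀ k, ArmijoCondition f c (x k) (d k) (s k))
    (hbacktrack : ∀ k, IsBacktrackingStep f K c τ (x k) (d k) (s k))
    {φ : ℝ → ℝ} (hφmono : MonotoneOn φ (Set.Ioi 0)) (hφpos : ∀ ε > 0, 0 < φ ε)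
    (hangle : ∀ k, φ (descentSlope f (x k) (d k)) ≤ ‖d k‖)
    (hdecr : Tendsto (fun k => f (x k + s k • d k) - f (x k)) l (nhds 0)) :
    Tendsto (fun k => ⟪gradient f (x k), d k⟫ / ‖d k‖) l (nhds 0) := by
  obtain ⟨hc0, hc1⟩ := hc
  refine Metric.tendsto_nhds.2 fun ε hε => ?_
  obtain ⟨m, hm, hmove⟩ := exists_pos_forall_le_mul_norm_of_isBacktrackingStep
    hf hgrad hc1 hτ hφmono hφpos hε
  filter_upwards [hdecr.eventually_const_lt (neg_lt_zero.2 (by positivity : 0 < c * m * ε))]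
    with k hsmall
  have habs : dist (⟪gradient f (x k), d k⟫ / ‖d k‖) 0 = descentSlope f (x k) (d k) := by
    rw [dist_zero_right, norm_div, norm_norm, Real.norm_of_nonpos (hdesc k).le, descentSlope]
  rw [habs]
  by_contra! hslope
  have hdecrease : c * m * ε ≤ f (x k) - f (x k + s k • d k) :=
    calc c * m * ε ≤ c * (s k * ‖d k‖) * descentSlope f (x k) (d k) := by
          have hmk := hmove _ _ _ (hbacktrack k) (hangle k) hslope
          have hnonneg := hm.le.trans hmk
          gcongr
      _ ≤ f (x k) - f (x k + s k • d k) := (harmijo k).mul_descentSlope_le_sub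
  linarith only [hsmall, hdecrease]

end ArmijoBacktracking

/-- Feasibility of the Armijo line search with (polynomial)
backtracking: if `∇f` is uniformly continuous on `K`, the iterates stay in `K`,
the Armijo condition holds, every accepted step is either `1` or at least a
fixed fraction `τ` of a rejected trial step whose segment stays in `K`, and the
angle condition with a gauge `φ` holds, then
`f(x_k + s_k d_k) − f(x_k) → 0` implies `⟨∇f(x_k), d_k⟩/‖d_k‖ → 0`. -/
theorem stmt_16 (N : ℕ) (f : EuclideanSpace ℝ (Fin N) → ℝ)
    (hf : Differentiable ℝ f)
    (K : Set (EuclideanSpace ℝ (Fin N)))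
    (hgrad : UniformContinuousOn (fun x => gradient f x) K)
    (c₁ τ : ℝ) (hc₁ : c₁ ∈ Set.Ioo (0 : ℝ) 1) (hτ : τ ∈ Set.Ioo (0 : ℝ) 1)
    (x d : ℕ → EuclideanSpace ℝ (Fin N)) (s : ℕ → ℝ)
    (hxK : ∀ k, x k ∈ K)
    (hd0 : ∀ k, d k ≠ 0)
    (hdesc : ∀ k, ⟪gradient f (x k), d k⟫ < 0)
    (hs : ∀ k, 0 < s k)
    (harmijo : ∀ k, f (x k + s k • d k) ≤ f (x k) + c₁ * s k * ⟪gradient f (x k), d k⟫)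
    (hbacktrack : ∀ k, s k = 1 ∨ ∃ shat : ℝ, 0 < shat ∧ τ * shat ≤ s k ∧
      f (x k) + c₁ * shat * ⟪gradient f (x k), d k⟫ < f (x k + shat • d k) ∧
      ∀ t ∈ Set.Icc (0 : ℝ) shat, x k + t • d k ∈ K)
    (φ : ℝ → ℝ)
    (hφmono : MonotoneOn φ (Set.Ici (0 : ℝ)))
    (hφcont : ContinuousOn φ (Set.Ici (0 : ℝ)))
    (hφ0 : 0 ≤ φ 0)
    (hφpos : ∀ ε : ℝ, 0 < ε → φ 0 < φ ε)
    (hangle : ∀ k, φ ((-⟪gradient f (x k), d k⟫) / ‖d k‖) ≤ ‖d k‖)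
    (hdecr : Tendsto (fun k => f (x k + s k • d k) - f (x k)) atTop (nhds 0)) :
    Tendsto (fun k => ⟪gradient f (x k), d k⟫ / ‖d k‖) atTop (nhds 0) :=
  stmt_16_general (fun y _ => hf y) hgrad hc₁ hτ.1 hdesc harmijo
    (fun k => (hbacktrack k).imp_right fun ⟨r, hr, hrs, hfail, hK⟩ =>
      ⟨r, hr, hrs, hfail.not_ge, hK⟩)
    (hφmono.mono Set.Ioi_subset_Ici_self) (fun ε hε => hφ0.trans_lt (hφpos ε hε)) hangle hdecr
end
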